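/- Let g(t) := t·ln(1+t) for t ≥ 0, f(t) := g(√t), and λ(t) := 2f''(t)/f'(t). Then the Nitsche integral diverges: ∫₁^∞ [(1 + t·λ(t))/(2 + t·λ(t))] · (1/t) dt = ∞. -/

import Mathlib

open Real MeasureTheory

noncomputable section

/-- `g(t) = t·ln(1+t)`. -/
def gN : ℝ → ℝ := fun t => t * Real.log (1 + t)

/-- `f(t) = g(√t)`. -/
def fN : ℝ → ℝ := fun t => gN (Real.sqrt t)

/-- `λ(t) = 2 f''(t) / f'(t)`. -/
def lamN : ℝ → ℝ := fun t => 2 * deriv (deriv fN) t / deriv fN t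

/-!
Let `f(t) = g(√t)`. Taking the logarithmic derivative of `f'(t) = g'(√t) / (2√t)` gives
`1 + t λ(t) = s g''(s) / g'(s)` with `s = √t`. For `g(s) = s log (1 + s)` the numerator `s g''(s)`
is bounded below on `[1, ∞)` by a positive constant, while `g'(s)` grows only logarithmically, so
the Nitsche integrand is at least `1 / (t (4 + log t))` for `t ≥ 1`. This is the derivative of
`log (4 + log t)`, which is unbounded.
-/

open Filter Set Topology

section DivergentIntegrals

theorem lintegral_ofReal_eq_top_of_not_integrable_of_le {α : Type*} {m : MeasurableSpace α}
    {μ : Measure α} {f g : α → ℝ} (hf : ¬ Integrable f μ) (hfm : AEStronglyMeasurable f μ)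
    (hf_nonneg : 0 ≤ᵐ[μ] f) (hfg : f ≤ᵐ[μ] g) : ∫⁻ x, ENNReal.ofReal (g x) ∂μ = ⊤ := by
  contrapose hf
  exact (lintegral_ofReal_ne_top_iff_integrable hfm hf_nonneg).1 <|
    ne_top_of_le_ne_top hf <| lintegral_mono_ae <| hfg.mono fun _ => ENNReal.ofReal_le_ofReal

theorem not_integrableOn_Ioi_logDeriv_of_tendsto_atTop {h : ℝ → ℝ} (a : ℝ)
    (hd : ∀ᶠ t in atTop, DifferentiableAt ℝ h t) (hh : Tendsto h atTop atTop) :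
    ¬ IntegrableOn (logDeriv h) (Ioi a) := by
  have hne : ∀ᶠ t in atTop, h t ≠ 0 := hh.eventually_ne_atTop 0
  refine not_integrableOn_of_tendsto_norm_atTop_of_deriv_isBigO_filter (f := fun t => log (h t))
    atTop (Ioi_mem_atTop a) ?_ (tendsto_norm_atTop_atTop.comp (tendsto_log_atTop.comp hh))
    (EventuallyEq.isBigO ?_)
  · filter_upwards [hd, hne] with t ht hnet using ht.log hnet
  · filter_upwards [hd, hne] with t ht hnet using deriv.log ht hnet

theorem not_integrableOn_Ioi_inv_mul_const_add_log (a c : ℝ) :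
    ¬ IntegrableOn (fun t => (t * (c + log t))⁻¹) (Ioi a) := by
  have hlogDeriv : logDeriv (fun t => c + log t) = fun t => (t * (c + log t))⁻¹ := by
    ext t
    rw [logDeriv_apply, deriv_const_add, deriv_log, div_eq_mul_inv, mul_inv]
  rw [← hlogDeriv]
  refine not_integrableOn_Ioi_logDeriv_of_tendsto_atTop a ?_
    (tendsto_atTop_add_const_left _ c tendsto_log_atTop)
  filter_upwards [eventually_ne_atTop 0] with t ht using (differentiableAt_log ht).const_add c

end DivergentIntegrals

section SqrtSubstitution

variable {g : ℝ → ℝ} {t : ℝ}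

theorem deriv_comp_sqrt (ht : 0 < t) (hg : DifferentiableAt ℝ g √t) :
    deriv (fun u => g √u) t = deriv g √t / (2 * √t) :=
  (hg.hasDerivAt.comp t (hasDerivAt_sqrt ht.ne')).deriv.trans (mul_one_div _ _)

theorem logDeriv_sqrt (ht : 0 < t) : logDeriv sqrt t = 1 / (2 * t) := by
  rw [logDeriv_apply, (hasDerivAt_sqrt ht.ne').deriv, div_div, mul_assoc, mul_self_sqrt ht.le]

theorem one_add_mul_two_mul_logDeriv_deriv_comp_sqrt (ht : 0 < t)
    (hg' : DifferentiableAt ℝ (deriv g) √t) (hne : deriv g √t ≠ 0) :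
    1 + t * (2 * logDeriv (deriv fun u => g √u) t) = √t * logDeriv (deriv g) √t := by
  have hsqrt : DifferentiableAt ℝ sqrt t := (hasDerivAt_sqrt ht.ne').differentiableAt
  have hg : ∀ᶠ s in 𝓝 √t, DifferentiableAt ℝ g s :=
    (hg'.continuousAt.eventually_ne hne).mono fun _ => differentiableAt_of_deriv_ne_zero
  have hderiv : (deriv fun u => g √u) =ᶠ[𝓝 t] fun u => (deriv g ∘ sqrt) u / (2 * √u) := by
    filter_upwards [lt_mem_nhds ht, continuous_sqrt.continuousAt.eventually hg] with u hu hgu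
      using deriv_comp_sqrt hu hgu
  have hlogDeriv : logDeriv (deriv fun u => g √u) t =
      logDeriv (deriv g) √t * (1 / (2 * √t)) - 1 / (2 * t) := by
    rw [(logDeriv_congr_nhds hderiv).eq_of_nhds,
      logDeriv_div t hne (by positivity) (hg'.comp t hsqrt) (hsqrt.const_mul 2),
      logDeriv_comp hg' hsqrt, (hasDerivAt_sqrt ht.ne').deriv,
      logDeriv_const_mul t 2 two_ne_zero, logDeriv_sqrt ht]
  rw [hlogDeriv]
  field_simp
  linear_combination logDeriv (deriv g) √t * (sq_sqrt ht.le).symm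

end SqrtSubstitution

section LogarithmicWeight

variable {s t : ℝ}

theorem hasDerivAt_gN (hs : 1 + s ≠ 0) : HasDerivAt gN (log (1 + s) + s / (1 + s)) s := by
  have h := (hasDerivAt_id' s).mul (((hasDerivAt_id' s).const_add 1).log hs)
  exact h.congr_deriv (by ring)

theorem hasDerivAt_deriv_gN (hs : 1 + s ≠ 0) :
    HasDerivAt (deriv gN) ((2 + s) / (1 + s) ^ 2) s := by
  have hadd : HasDerivAt (fun x : ℝ => 1 + x) 1 s := (hasDerivAt_id' s).const_add 1
  have hderiv : deriv gN =ᶠ[𝓝 s] fun x => log (1 + x) + x / (1 + x) := by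
    filter_upwards [hadd.continuousAt.eventually_ne hs] with x hx using (hasDerivAt_gN hx).deriv
  refine (((hadd.log hs).add ((hasDerivAt_id' s).div hadd hs)).congr_of_eventuallyEq
    hderiv).congr_deriv ?_
  field_simp
  ring

theorem deriv_gN_pos (hs : 0 < s) : 0 < deriv gN s := by
  have hlog : 0 < log (1 + s) := log_pos (by linarith)
  rw [(hasDerivAt_gN (by positivity)).deriv]
  positivity

theorem deriv_gN_le (hs : 1 ≤ s) : deriv gN s ≤ 2 + log s := by
  have hlog : log (1 + s) ≤ log 2 + log s := by
    rw [← log_mul two_ne_zero (by positivity)]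
    exact log_le_log (by positivity) (by linarith)
  have hdiv : s / (1 + s) ≤ 1 := div_le_one_of_le₀ (by linarith) (by positivity)
  rw [(hasDerivAt_gN (by positivity)).deriv]
  linarith [log_two_lt_d9]

theorem three_quarters_le_mul_deriv_deriv_gN (hs : 1 ≤ s) :
    3 / 4 ≤ s * deriv (deriv gN) s := by
  rw [(hasDerivAt_deriv_gN (by positivity)).deriv, ← mul_div_assoc, le_div_iff₀ (by positivity)]
  nlinarith

theorem inv_three_add_two_mul_log_le_mul_logDeriv_deriv_gN (hs : 1 ≤ s) :
    (3 + 2 * log s)⁻¹ ≤ s * logDeriv (deriv gN) s := by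
  have hlog : 0 ≤ log s := log_nonneg hs
  rw [logDeriv_apply, ← mul_div_assoc, inv_eq_one_div,
    div_le_div_iff₀ (by positivity) (deriv_gN_pos (by positivity))]
  calc 1 * deriv gN s ≤ 3 / 4 * (3 + 2 * log s) := by linarith [deriv_gN_le hs]
    _ ≤ s * deriv (deriv gN) s * (3 + 2 * log s) := by
      gcongr
      exact three_quarters_le_mul_deriv_deriv_gN hs

theorem one_add_mul_lamN (ht : 0 < t) : 1 + t * lamN t = √t * logDeriv (deriv gN) √t := by
  have hs : 0 < √t := sqrt_pos.2 ht
  rw [← one_add_mul_two_mul_logDeriv_deriv_comp_sqrt ht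
    (hasDerivAt_deriv_gN (by positivity)).differentiableAt (deriv_gN_pos hs).ne',
    logDeriv_apply, ← mul_div_assoc]
  rfl

theorem inv_three_add_log_le_one_add_mul_lamN (ht : 1 ≤ t) :
    (3 + log t)⁻¹ ≤ 1 + t * lamN t := by
  have hlog : log t = 2 * log √t := by rw [log_sqrt (by positivity)]; ring
  rw [one_add_mul_lamN (by positivity), hlog]
  exact inv_three_add_two_mul_log_le_mul_logDeriv_deriv_gN (one_le_sqrt.2 ht)

theorem inv_mul_four_add_log_le_nitsche_integrand (ht : 1 ≤ t) :
    (t * (4 + log t))⁻¹ ≤ (1 + t * lamN t) / (2 + t * lamN t) * (1 / t) := by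
  have hlog : 0 ≤ log t := log_nonneg ht
  have hle : (3 + log t)⁻¹ ≤ 1 + t * lamN t := inv_three_add_log_le_one_add_mul_lamN ht
  have hpos : 0 < 1 + t * lamN t := lt_of_lt_of_le (by positivity) hle
  have hquot : (4 + log t)⁻¹ ≤ (1 + t * lamN t) / (2 + t * lamN t) := by
    rw [inv_le_iff_one_le_mul₀ (by positivity)] at hle
    rw [inv_eq_one_div, div_le_div_iff₀ (by positivity) (by linarith)]
    linarith
  calc (t * (4 + log t))⁻¹ = (4 + log t)⁻¹ * (1 / t) := by rw [mul_inv_rev, one_div]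
    _ ≤ (1 + t * lamN t) / (2 + t * lamN t) * (1 / t) := by gcongr

end LogarithmicWeight

theorem statement18 :
    ∫⁻ t in Set.Ioi (1 : ℝ),
      ENNReal.ofReal ((1 + t * lamN t) / (2 + t * lamN t) * (1 / t)) = ⊤ := by
  have hmeas : Measurable fun t : ℝ => (t * (4 + log t))⁻¹ := by fun_prop
  refine lintegral_ofReal_eq_top_of_not_integrable_of_le
    (not_integrableOn_Ioi_inv_mul_const_add_log 1 4) hmeas.aestronglyMeasurable ?_ ?_
  · filter_upwards [ae_restrict_mem measurableSet_Ioi] with t ht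
    have ht_pos : 0 < t := zero_lt_one.trans ht
    have hlog : 0 < log t := log_pos ht
    exact inv_nonneg.2 (by positivity)
  · filter_upwards [ae_restrict_mem measurableSet_Ioi] with t ht
    exact inv_mul_four_add_log_le_nitsche_integrand (le_of_lt ht)
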